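/- For every real ε, every positive integer N (h = 1/N), every vector (ψ₀,…,ψ_{N−1}) ∈ ℂ^N with associated step function ψ_h = Σ_{j=0}^{N−1} ψ_j χ_{j+ε}, and every 1-periodic function u ∈ C²(ℝ, ℂ), one has | Σ_{j=0}^{N−1} ψ_j ( h u(t_{j+ε}) − ∫_{t_{j+ε}−h/2}^{t_{j+ε}+h/2} u(t) dt ) | ≤ (1/2) (π h)² ‖ψ_h‖₀ ‖u‖₂. -/

import Mathlib

/-!
Integrating by parts twice against the parabolas `(t - (a ∓ δ))² / 2` on the two halves of
`[a - δ, a + δ]` writes the midpoint error as an integral of `u''` against a kernel bounded by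
`δ² / 2`, the boundary terms in `u' a` cancelling. With Cauchy–Schwarz on the cell, its square is at
most `(δ² / 2)² * 2δ * ∫ ‖u''‖²`. For `δ = h / 2` the `N` cells tile one period, so the `ℓ²` norm of
the errors is at most `h² / 8 * √h * ‖u''‖₀`, and a second Cauchy–Schwarz against `ψ` produces
`√h * ‖ψ‖_{ℓ²} = ‖ψ_h‖₀`. Finally `(u'')^(m) = (2πim)² û(m)` and Parseval give
`‖u''‖₀ ≤ (2π)² ‖u‖₂`; the constant is `(2π)² / 8 = π² / 2`.
-/

noncomputable section

/-- Smooth kernel data, 1-periodic in each variable. -/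
def SPK (A : ℝ → ℝ → ℂ) : Prop :=
  ContDiff ℝ (⊤ : ℕ∞) (fun p : ℝ × ℝ => A p.1 p.2) ∧
    (∀ s t, A (s + 1) t = A s t) ∧ (∀ s t, A s (t + 1) = A s t)

/-- Logarithmic kernel `V(s,t) = (i/(2π)) A(s,t) log(sin²(π(s−t))) + K(s,t)`. -/
def logKer (A K : ℝ → ℝ → ℂ) (s t : ℝ) : ℂ :=
  Complex.I / (2 * Real.pi) * A s t * (Real.log (Real.sin (Real.pi * (s - t)) ^ 2) : ℂ) + K s t

/-- Grid point `s_{j+ε} = (j − 1/2 + ε)h`. -/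
def sg (h ε : ℝ) (j : ℤ) : ℝ := ((j : ℝ) - 1 / 2 + ε) * h

/-- Grid point `t_{j+ε} = (j + ε)h`. -/
def tg (h ε : ℝ) (j : ℤ) : ℝ := ((j : ℝ) + ε) * h

/-- Integral operator with kernel `V`. -/
def Vop (V : ℝ → ℝ → ℂ) (φ : ℝ → ℂ) (s : ℝ) : ℂ := ∫ t in (0:ℝ)..1, V s t * φ t

/-- Hypersingular operator `W = −D V₁ D + V₂`. -/
def Wop (V1 V2 : ℝ → ℝ → ℂ) (φ : ℝ → ℂ) (s : ℝ) : ℂ :=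
  -deriv (Vop V1 (deriv φ)) s + Vop V2 φ s

/-- Nyström matrix entries `W^ε_{ij}`. -/
def Wmat (V1 V2 : ℝ → ℝ → ℂ) (h ε : ℝ) (i j : ℤ) : ℂ :=
  V1 (sg h ε (i + 1)) (sg h 0 (j + 1)) - V1 (sg h ε i) (sg h 0 (j + 1))
    - V1 (sg h ε (i + 1)) (sg h 0 j) + V1 (sg h ε i) (sg h 0 j)
    + (h : ℂ) ^ 2 * V2 (tg h ε i) (tg h 0 j)

/-- Fourier coefficient of a 1-periodic function. -/
def fc (u : ℝ → ℂ) (m : ℤ) : ℂ :=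
  ∫ t in (0:ℝ)..1, u t * Complex.exp (-(2 * Real.pi * Complex.I * (m : ℂ) * (t : ℂ)))

/-- Periodic Sobolev norm of order `r`. -/
def sobNorm (r : ℝ) (u : ℝ → ℂ) : ℝ :=
  Real.sqrt (‖fc u 0‖ ^ 2 +
    ∑' m : ℤ, if m = 0 then 0 else |(m : ℝ)| ^ (2 * r) * ‖fc u m‖ ^ 2)

/-- 1-periodic step function on the ε-shifted grid with coefficients `v`. -/
def stepf (N : ℕ) (ε : ℝ) (v : ZMod N → ℂ) (s : ℝ) : ℂ :=
  v ((⌊s * N + 1 / 2 - ε⌋ : ℤ) : ZMod N)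

/-- Midpoint quadrature error matrix entries `E^ε_{ij}`. -/
def Emat (V2 : ℝ → ℝ → ℂ) (h ε : ℝ) (i j : ℤ) : ℂ :=
  (∫ s in (sg h ε i)..(sg h ε (i + 1)), ∫ t in (sg h 0 j)..(sg h 0 (j + 1)), V2 s t)
    - (h : ℂ) ^ 2 * V2 (tg h ε i) (tg h 0 j)

/-- Spectral (ℓ²-operator) norm of a complex `N×N` matrix. -/
def specNorm {N : ℕ} (M : Matrix (Fin N) (Fin N) ℂ) : ℝ :=
  ‖LinearMap.toContinuousLinearMap (Matrix.toEuclideanLin M)‖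

/-- The function `C̄₁(t) = −(1/(2πi)) log(4 sin²(πt))`. -/
def Cbar1 (t : ℝ) : ℂ :=
  -(1 / (2 * Real.pi * Complex.I)) * (Real.log (4 * Real.sin (Real.pi * t) ^ 2) : ℂ)

end

section Preliminaries

open MeasureTheory Set

lemma sum_zmod_val {M : Type*} [AddCommMonoid M] (N : ℕ) [NeZero N] (f : ℕ → M) :
    ∑ j : ZMod N, f j.val = ∑ k ∈ Finset.range N, f k := by
  obtain ⟨n, rfl⟩ := Nat.exists_eq_succ_of_ne_zero (NeZero.ne N)
  exact Fin.sum_univ_eq_sum_range f (n + 1)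

lemma norm_sum_mul_le_sqrt_mul_sqrt {ι R : Type*} [SeminormedRing R] (s : Finset ι)
    (f g : ι → R) :
    ‖∑ i ∈ s, f i * g i‖ ≤ √(∑ i ∈ s, ‖f i‖ ^ 2) * √(∑ i ∈ s, ‖g i‖ ^ 2) :=
  (norm_sum_le_of_le s fun i _ => norm_mul_le (f i) (g i)).trans
    (Real.sum_mul_le_sqrt_mul_sqrt s _ _)

lemma periodic_iteratedDeriv {𝕜 F : Type*} [NontriviallyNormedField 𝕜] [NormedAddCommGroup F]
    [NormedSpace 𝕜 F] {f : 𝕜 → F} {T : 𝕜} (hf : Function.Periodic f T) (n : ℕ) :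
    Function.Periodic (iteratedDeriv n f) T := fun t => by
  rw [← congrFun (iteratedDeriv_comp_add_const n f T) t, hf.funext]

lemma sq_integral_norm_le {α F : Type*} [MeasurableSpace α] [NormedAddCommGroup F] {μ : Measure α}
    [IsFiniteMeasure μ] {f : α → F} (hf : MemLp f 2 μ) :
    (∫ x, ‖f x‖ ∂μ) ^ 2 ≤ μ.real univ * ∫ x, ‖f x‖ ^ 2 ∂μ := by
  rcases eq_zero_or_neZero μ with rfl | _
  · simp
  have jensen : (⨍ x, ‖f x‖ ∂μ) ^ 2 ≤ ⨍ x, ‖f x‖ ^ 2 ∂μ :=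
    (even_two.convexOn_pow (𝕜 := ℝ)).map_average_le (continuous_pow 2).continuousOn isClosed_univ
      (by simp) (hf.integrable one_le_two).norm hf.integrable_norm_pow'
  have hμ : 0 < μ.real univ := measureReal_univ_pos
  simp only [average_eq, smul_eq_mul] at jensen
  calc (∫ x, ‖f x‖ ∂μ) ^ 2
      = μ.real univ ^ 2 * ((μ.real univ)⁻¹ * ∫ x, ‖f x‖ ∂μ) ^ 2 := by field_simp
    _ ≤ μ.real univ ^ 2 * ((μ.real univ)⁻¹ * ∫ x, ‖f x‖ ^ 2 ∂μ) := by gcongr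
    _ = μ.real univ * ∫ x, ‖f x‖ ^ 2 ∂μ := by field_simp

lemma memLp_restrict_Ioc_of_continuous {F : Type*} [NormedAddCommGroup F] {f : ℝ → F}
    (hf : Continuous f) (r : ENNReal) (a b : ℝ) : MemLp f r (volume.restrict (Ioc a b)) := by
  obtain ⟨C, hC⟩ := (isCompact_Icc (a := a) (b := b)).exists_bound_of_continuousOn hf.continuousOn
  exact .of_bound hf.aestronglyMeasurable C <|
    ae_restrict_of_forall_mem measurableSet_Ioc fun t ht => hC t (Ioc_subset_Icc_self ht)

end Preliminaries

section MidpointRule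

open MeasureTheory Set

variable {E : Type*} [NormedAddCommGroup E] [NormedSpace ℝ E] {u u' u'' : ℝ → E} {a c p q δ : ℝ}

lemma norm_integral_half_sq_smul_le {g : ℝ → E} (hpq : p ≤ q)
    (hg : IntervalIntegrable g volume p q) (hc : ∀ t ∈ Ioc p q, |t - c| ≤ δ) :
    ‖∫ t in p..q, ((t - c) ^ 2 / 2) • g t‖ ≤ δ ^ 2 / 2 * ∫ t in p..q, ‖g t‖ := by
  rw [← intervalIntegral.integral_const_mul]
  refine intervalIntegral.norm_integral_le_of_norm_le hpq (.of_forall fun t ht => ?_)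
    (hg.norm.const_mul _)
  rw [norm_smul, Real.norm_of_nonneg (by positivity)]
  gcongr ?_ / 2 * _
  exact sq_le_sq.2 ((hc t ht).trans (le_abs_self δ))

variable [CompleteSpace E]

lemma integral_half_sq_smul_eq_of_hasDerivAt (hu : ∀ t ∈ uIcc p q, HasDerivAt u (u' t) t)
    (hu' : ∀ t ∈ uIcc p q, HasDerivAt u' (u'' t) t) (hint : IntervalIntegrable u'' volume p q)
    (c : ℝ) :
    ∫ t in p..q, ((t - c) ^ 2 / 2) • u'' t =
      (((q - c) ^ 2 / 2) • u' q - (q - c) • u q)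
        - (((p - c) ^ 2 / 2) • u' p - (p - c) • u p) + ∫ t in p..q, u t := by
  have hasDerivAt_primitive : ∀ t ∈ uIcc p q,
      HasDerivAt (fun t => ((t - c) ^ 2 / 2) • u' t - (t - c) • u t)
        (((t - c) ^ 2 / 2) • u'' t - u t) t := by
    intro t ht
    have hlin : HasDerivAt (fun t : ℝ => t - c) 1 t := (hasDerivAt_id t).sub_const c
    have hquad : HasDerivAt (fun t : ℝ => (t - c) ^ 2 / 2) (t - c) t :=
      ((hlin.pow 2).div_const 2).congr_deriv (by norm_num)
    exact ((hquad.smul (hu' t ht)).sub (hlin.smul (hu t ht))).congr_deriv (by module)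
  have hint_smul : IntervalIntegrable (fun t => ((t - c) ^ 2 / 2) • u'' t) volume p q :=
    hint.continuousOn_smul (by fun_prop)
  have hint_u : IntervalIntegrable u volume p q :=
    ContinuousOn.intervalIntegrable fun t ht => (hu t ht).continuousAt.continuousWithinAt
  rw [← intervalIntegral.integral_eq_sub_of_hasDerivAt hasDerivAt_primitive (hint_smul.sub hint_u),
    intervalIntegral.integral_sub hint_smul hint_u, sub_add_cancel]

lemma norm_midpoint_sub_integral_le (hδ : 0 ≤ δ)
    (hu : ∀ t ∈ Icc (a - δ) (a + δ), HasDerivAt u (u' t) t)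
    (hu' : ∀ t ∈ Icc (a - δ) (a + δ), HasDerivAt u' (u'' t) t)
    (hint : IntervalIntegrable u'' volume (a - δ) (a + δ)) :
    ‖(2 * δ) • u a - ∫ t in (a - δ)..(a + δ), u t‖ ≤
      δ ^ 2 / 2 * ∫ t in (a - δ)..(a + δ), ‖u'' t‖ := by
  have hla : a - δ ≤ a := by linarith
  have har : a ≤ a + δ := by linarith
  have subl : uIcc (a - δ) a ⊆ Icc (a - δ) (a + δ) :=
    uIcc_of_le hla ▸ Icc_subset_Icc_right har
  have subr : uIcc a (a + δ) ⊆ Icc (a - δ) (a + δ) :=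
    uIcc_of_le har ▸ Icc_subset_Icc_left hla
  have hcont : ContinuousOn u (Icc (a - δ) (a + δ)) := fun t ht =>
    (hu t ht).continuousAt.continuousWithinAt
  have hintl : IntervalIntegrable u'' volume (a - δ) a :=
    hint.mono_set (subl.trans Icc_subset_uIcc)
  have hintr : IntervalIntegrable u'' volume a (a + δ) :=
    hint.mono_set (subr.trans Icc_subset_uIcc)
  have peano : (2 * δ) • u a - ∫ t in (a - δ)..(a + δ), u t =
      -((∫ t in (a - δ)..a, ((t - (a - δ)) ^ 2 / 2) • u'' t) +
        ∫ t in a..(a + δ), ((t - (a + δ)) ^ 2 / 2) • u'' t) := by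
    rw [integral_half_sq_smul_eq_of_hasDerivAt (fun t ht => hu t (subl ht))
        (fun t ht => hu' t (subl ht)) hintl,
      integral_half_sq_smul_eq_of_hasDerivAt (fun t ht => hu t (subr ht))
        (fun t ht => hu' t (subr ht)) hintr,
      ← intervalIntegral.integral_add_adjacent_intervals (hcont.mono subl).intervalIntegrable
        (hcont.mono subr).intervalIntegrable]
    module
  rw [peano, norm_neg,
    ← intervalIntegral.integral_add_adjacent_intervals hintl.norm hintr.norm, mul_add]
  refine norm_add_le_of_le (norm_integral_half_sq_smul_le hla hintl fun t ht => ?_)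
    (norm_integral_half_sq_smul_le har hintr fun t ht => ?_)
  all_goals exact abs_le.2 ⟨by linarith [ht.1], by linarith [ht.2]⟩

lemma sq_norm_midpoint_sub_integral_le (hδ : 0 ≤ δ)
    (hu : ∀ t ∈ Icc (a - δ) (a + δ), HasDerivAt u (u' t) t)
    (hu' : ∀ t ∈ Icc (a - δ) (a + δ), HasDerivAt u' (u'' t) t)
    (hL2 : MemLp u'' 2 (volume.restrict (Ioc (a - δ) (a + δ)))) :
    ‖(2 * δ) • u a - ∫ t in (a - δ)..(a + δ), u t‖ ^ 2 ≤
      (δ ^ 2 / 2) ^ 2 * (2 * δ) * ∫ t in (a - δ)..(a + δ), ‖u'' t‖ ^ 2 := by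
  have hle : a - δ ≤ a + δ := by linarith
  have hint : IntervalIntegrable u'' volume (a - δ) (a + δ) :=
    (intervalIntegrable_iff_integrableOn_Ioc_of_le hle).2 (hL2.integrable one_le_two)
  have cauchySchwarz : (∫ t in (a - δ)..(a + δ), ‖u'' t‖) ^ 2 ≤
      2 * δ * ∫ t in (a - δ)..(a + δ), ‖u'' t‖ ^ 2 := by
    have hvol : (volume.restrict (Ioc (a - δ) (a + δ))).real univ = 2 * δ := by
      rw [measureReal_restrict_apply_univ, Real.volume_real_Ioc_of_le hle]; ring
    simpa only [intervalIntegral.integral_of_le hle, hvol] using sq_integral_norm_le hL2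
  calc ‖(2 * δ) • u a - ∫ t in (a - δ)..(a + δ), u t‖ ^ 2
      ≤ (δ ^ 2 / 2 * ∫ t in (a - δ)..(a + δ), ‖u'' t‖) ^ 2 := by
        gcongr; exact norm_midpoint_sub_integral_le hδ hu hu' hint
    _ = (δ ^ 2 / 2) ^ 2 * (∫ t in (a - δ)..(a + δ), ‖u'' t‖) ^ 2 := mul_pow _ _ _
    _ ≤ (δ ^ 2 / 2) ^ 2 * (2 * δ) * ∫ t in (a - δ)..(a + δ), ‖u'' t‖ ^ 2 := by
        rw [mul_assoc]; gcongr

lemma tg_sub_half (h ε : ℝ) (j : ℤ) : tg h ε j - h / 2 = sg h ε j := by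
  unfold tg sg; ring

lemma tg_add_half (h ε : ℝ) (j : ℤ) : tg h ε j + h / 2 = sg h ε (j + 1) := by
  unfold tg sg; push_cast; ring

lemma sum_sq_norm_midpoint_sub_integral_le (hu : ContDiff ℝ 2 u) {h : ℝ} (hh : 0 ≤ h) (ε : ℝ)
    (n : ℕ) :
    ∑ k ∈ Finset.range n,
        ‖h • u (tg h ε k) - ∫ t in (tg h ε k - h / 2)..(tg h ε k + h / 2), u t‖ ^ 2 ≤
      (h ^ 2 / 8) ^ 2 * h * ∫ t in (sg h ε 0)..(sg h ε n), ‖iteratedDeriv 2 u t‖ ^ 2 := by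
  have hcont : Continuous (iteratedDeriv 2 u) := hu.continuous_iteratedDeriv' 2
  have hderiv (t : ℝ) : HasDerivAt u (deriv u t) t :=
    (hu.differentiable two_ne_zero t).hasDerivAt
  have hderiv2 (t : ℝ) : HasDerivAt (deriv u) (iteratedDeriv 2 u t) t := by
    rw [iteratedDeriv_succ, iteratedDeriv_one]
    exact (hu.differentiable_deriv_two t).hasDerivAt
  have cell (k : ℕ) :
      ‖h • u (tg h ε k) - ∫ t in (tg h ε k - h / 2)..(tg h ε k + h / 2), u t‖ ^ 2 ≤
        (h ^ 2 / 8) ^ 2 * h *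
          ∫ t in (sg h ε k)..(sg h ε (k + 1 : ℕ)), ‖iteratedDeriv 2 u t‖ ^ 2 := by
    have hcell := sq_norm_midpoint_sub_integral_le (a := tg h ε k) (δ := h / 2) (by positivity)
      (fun t _ => hderiv t) (fun t _ => hderiv2 t)
      (memLp_restrict_Ioc_of_continuous hcont 2 _ _)
    have hconst : ((h / 2) ^ 2 / 2) ^ 2 = (h ^ 2 / 8) ^ 2 := by ring
    rw [mul_div_cancel₀ h two_ne_zero, hconst] at hcell
    rwa [Nat.cast_succ, ← tg_sub_half, ← tg_add_half]
  refine (Finset.sum_le_sum fun k _ => cell k).trans_eq ?_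
  rw [← Finset.mul_sum, intervalIntegral.sum_integral_adjacent_intervals
    (f := fun t => ‖iteratedDeriv 2 u t‖ ^ 2) (a := fun k : ℕ => sg h ε k)
    fun k _ => (hcont.norm.pow 2).intervalIntegrable _ _, Nat.cast_zero]

end MidpointRule

section FourierCoefficients

open MeasureTheory Set

lemma fc_eq_fourierCoeffOn (v : ℝ → ℂ) (m : ℤ) :
    fc v m = fourierCoeffOn (zero_lt_one' ℝ) v m := by
  rw [fourierCoeffOn_eq_integral, fc, sub_zero, div_one, one_smul]
  refine intervalIntegral.integral_congr fun t _ => ?_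
  simp only [smul_eq_mul, fourier_coe_apply]
  rw [mul_comm]
  push_cast
  ring_nf

lemma hasSum_sq_norm_fc {v : ℝ → ℂ} (hL2 : MemLp v 2 (volume.restrict (Ioc 0 1))) :
    HasSum (fun m => ‖fc v m‖ ^ 2) (∫ t in (0 : ℝ)..1, ‖v t‖ ^ 2) := by
  simpa [fc_eq_fourierCoeffOn] using hasSum_sq_fourierCoeffOn (zero_lt_one' ℝ) hL2

lemma fc_of_hasDerivAt {v v' : ℝ → ℂ} (hv : ∀ t ∈ uIcc (0 : ℝ) 1, HasDerivAt v (v' t) t)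
    (hint : IntervalIntegrable v' volume 0 1) (hends : v 1 = v 0) (m : ℤ) :
    fc v' m = 2 * Real.pi * Complex.I * m * fc v m := by
  rcases eq_or_ne m 0 with rfl | hm
  · simp [fc, intervalIntegral.integral_eq_sub_of_hasDerivAt hv hint, hends]
  · have hmC : (m : ℂ) ≠ 0 := Int.cast_ne_zero.2 hm
    have hπ : (Real.pi : ℂ) ≠ 0 := Complex.ofReal_ne_zero.2 Real.pi_ne_zero
    rw [fc_eq_fourierCoeffOn, fc_eq_fourierCoeffOn,
      fourierCoeffOn_of_hasDerivAt (zero_lt_one' ℝ) hm hv hint, hends]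
    field_simp
    simp

lemma fc_iteratedDeriv {u : ℝ → ℂ} {k : ℕ} (hu : ContDiff ℝ k u) (hper : Function.Periodic u 1)
    (m : ℤ) : fc (iteratedDeriv k u) m = (2 * Real.pi * Complex.I * m) ^ k * fc u m := by
  induction k with
  | zero => simp
  | succ k ih =>
    have hderiv (t : ℝ) :
        HasDerivAt (iteratedDeriv k u) (iteratedDeriv (k + 1) u t) t := by
      rw [iteratedDeriv_succ]
      exact (hu.differentiable_iteratedDeriv' k t).hasDerivAt
    have hends : iteratedDeriv k u 1 = iteratedDeriv k u 0 := by
      simpa using periodic_iteratedDeriv hper k 0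
    rw [fc_of_hasDerivAt (fun t _ => hderiv t)
      ((hu.continuous_iteratedDeriv' (k + 1)).intervalIntegrable _ _) hends,
      ih (hu.of_le (by exact_mod_cast k.le_succ)), pow_succ']
    ring

lemma norm_fc_iteratedDeriv {u : ℝ → ℂ} {k : ℕ} (hu : ContDiff ℝ k u)
    (hper : Function.Periodic u 1) (m : ℤ) :
    ‖fc (iteratedDeriv k u) m‖ = (2 * Real.pi) ^ k * |(m : ℝ)| ^ k * ‖fc u m‖ := by
  rw [fc_iteratedDeriv hu hper]
  simp [mul_pow, abs_of_pos Real.pi_pos]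

lemma sobNorm_nonneg (r : ℝ) (u : ℝ → ℂ) : 0 ≤ sobNorm r u := Real.sqrt_nonneg _

lemma sq_sobNorm (r : ℝ) (u : ℝ → ℂ) :
    sobNorm r u ^ 2 = ‖fc u 0‖ ^ 2 +
      ∑' m : ℤ, if m = 0 then 0 else |(m : ℝ)| ^ (2 * r) * ‖fc u m‖ ^ 2 :=
  Real.sq_sqrt <| add_nonneg (sq_nonneg _) <| tsum_nonneg fun m => by split_ifs <;> positivity

lemma integral_sq_norm_iteratedDeriv_le {u : ℝ → ℂ} {k : ℕ} (hu : ContDiff ℝ k u)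
    (hper : Function.Periodic u 1) :
    ∫ t in (0 : ℝ)..1, ‖iteratedDeriv k u t‖ ^ 2 ≤ ((2 * Real.pi) ^ k * sobNorm k u) ^ 2 := by
  have hcont : Continuous (iteratedDeriv k u) := hu.continuous_iteratedDeriv' k
  have parseval := hasSum_sq_norm_fc (memLp_restrict_Ioc_of_continuous hcont 2 0 1)
  have hzero : ‖fc (iteratedDeriv k u) 0‖ ^ 2 ≤ ((2 * Real.pi) ^ k) ^ 2 * ‖fc u 0‖ ^ 2 := by
    rw [norm_fc_iteratedDeriv hu hper, mul_assoc, mul_pow]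
    gcongr
    simpa using mul_le_of_le_one_left (norm_nonneg _) (pow_le_one₀ le_rfl zero_le_one)
  have hnonzero (m : ℤ) : (if m = 0 then 0 else ‖fc (iteratedDeriv k u) m‖ ^ 2) =
      ((2 * Real.pi) ^ k) ^ 2 *
        (if m = 0 then 0 else |(m : ℝ)| ^ (2 * (k : ℝ)) * ‖fc u m‖ ^ 2) := by
    have hpow : |(m : ℝ)| ^ (2 * (k : ℝ)) = (|(m : ℝ)| ^ k) ^ 2 := by
      rw [mul_comm, Real.rpow_mul (abs_nonneg _), Real.rpow_natCast, Real.rpow_two]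
    rw [norm_fc_iteratedDeriv hu hper, hpow, mul_ite, mul_zero]
    ring_nf
  rw [← parseval.tsum_eq, parseval.summable.tsum_eq_add_tsum_ite 0, tsum_congr hnonzero,
    tsum_mul_left, mul_pow _ (sobNorm k u), sq_sobNorm, mul_add]
  gcongr

end FourierCoefficients

lemma sum_sq_norm_periodic_midpoint_sub_integral_le {u : ℝ → ℂ} (hu : ContDiff ℝ 2 u)
    (hper : Function.Periodic u 1) (ε : ℝ) {h : ℝ} {N : ℕ} (hN : N * h = 1) :
    ∑ k ∈ Finset.range N,
        ‖h • u (tg h ε k) - ∫ t in (tg h ε k - h / 2)..(tg h ε k + h / 2), u t‖ ^ 2 ≤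
      h * (1 / 2 * (Real.pi * h) ^ 2 * sobNorm 2 u) ^ 2 := by
  have hh : 0 ≤ h := by rw [eq_one_div_of_mul_eq_one_right hN]; positivity
  have hperiod : ∫ t in (sg h ε 0)..(sg h ε N), ‖iteratedDeriv 2 u t‖ ^ 2 =
      ∫ t in (0 : ℝ)..1, ‖iteratedDeriv 2 u t‖ ^ 2 := by
    have hend : sg h ε N = sg h ε 0 + 1 := by unfold sg; push_cast; linear_combination hN
    rw [hend]
    simpa using (((periodic_iteratedDeriv hper 2).comp fun z => ‖z‖ ^ 2).intervalIntegral_add_eq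
      (sg h ε 0) 0)
  calc _ ≤ (h ^ 2 / 8) ^ 2 * h * ∫ t in (sg h ε 0)..(sg h ε N), ‖iteratedDeriv 2 u t‖ ^ 2 :=
        sum_sq_norm_midpoint_sub_integral_le hu hh ε N
    _ ≤ (h ^ 2 / 8) ^ 2 * h * ((2 * Real.pi) ^ 2 * sobNorm 2 u) ^ 2 := by
        rw [hperiod]
        gcongr
        exact_mod_cast integral_sq_norm_iteratedDeriv_le (k := 2) hu hper
    _ = h * (1 / 2 * (Real.pi * h) ^ 2 * sobNorm 2 u) ^ 2 := by ring

/-- midpoint quadrature tested against a step function: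
`|Σ_j ψ_j (h u(t_{j+ε}) − ∫ u)| ≤ ½ (π h)² ‖ψ_h‖₀ ‖u‖₂`. -/
theorem stmt_9
    (ε : ℝ) (N : ℕ) [NeZero N] (ψ : ZMod N → ℂ)
    (u : ℝ → ℂ) (hu : ContDiff ℝ 2 u) (hper : Function.Periodic u 1) :
    ‖∑ j : ZMod N, ψ j *
        ((1 / (N : ℂ)) * u (tg (1 / (N : ℝ)) ε ((j.val : ℕ) : ℤ))
          - ∫ t in (tg (1 / (N : ℝ)) ε ((j.val : ℕ) : ℤ) - 1 / (2 * (N : ℝ)))..(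
              tg (1 / (N : ℝ)) ε ((j.val : ℕ) : ℤ) + 1 / (2 * (N : ℝ))), u t)‖ ≤
      1 / 2 * (Real.pi * (1 / (N : ℝ))) ^ 2
        * Real.sqrt ((1 / (N : ℝ)) * ∑ j : ZMod N, ‖ψ j‖ ^ 2) * sobNorm 2 u := by
  set h : ℝ := 1 / N with hdef
  have hh : 0 ≤ h := by positivity
  have hN : N * h = 1 := mul_one_div_cancel (NeZero.ne _)
  have hhalf : 1 / (2 * (N : ℝ)) = h / 2 := by rw [hdef]; ring
  have hsmul (z : ℂ) : 1 / (N : ℂ) * z = h • z := by simp [hdef]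
  simp only [hhalf, hsmul]
  have herr := sum_sq_norm_periodic_midpoint_sub_integral_le hu hper ε hN
  rw [← sum_zmod_val N fun k => ‖h • u (tg h ε k) -
    ∫ t in (tg h ε k - h / 2)..(tg h ε k + h / 2), u t‖ ^ 2] at herr
  refine (norm_sum_mul_le_sqrt_mul_sqrt _ _ _).trans ?_
  calc √(∑ j, ‖ψ j‖ ^ 2) * √(∑ j : ZMod N, ‖h • u (tg h ε j.val) -
          ∫ t in (tg h ε j.val - h / 2)..(tg h ε j.val + h / 2), u t‖ ^ 2)
      ≤ √(∑ j, ‖ψ j‖ ^ 2) * √(h * (1 / 2 * (Real.pi * h) ^ 2 * sobNorm 2 u) ^ 2) := by gcongr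
    _ = 1 / 2 * (Real.pi * h) ^ 2 * √(h * ∑ j, ‖ψ j‖ ^ 2) * sobNorm 2 u := by
        have := sobNorm_nonneg 2 u
        rw [Real.sqrt_mul hh, Real.sqrt_mul hh, Real.sqrt_sq (by positivity)]
        ring
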